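/- arXiv:0808.1238 — 3 statements merged into one kernel-verified Lean document; each statement's English description precedes it below -/
import Mathlib

section
/- Fix n > 3. For each i : Fin n let A_i be the permutation of states (Fin n → ZMod 2) that replaces y_i by y_{i−1} + y_i and leaves all other coordinates unchanged (the Wolfram rule 60 local function at i; each A_i is an involution). Then the subgroup of the permutation group of (Fin n → ZMod 2) generated by {A_i ∣ i : Fin n} is isomorphic to the special linear group SL_n(ZMod 2) (equivalently PSL_n(F_2), since the center of SL_n over F_2 is trivial). -/
open Matrix in
lemma transvection_comm_aux {n : ℕ} {i j k : Fin n} (hij : i ≠ j) (hjk : j ≠ k) (hik : i ≠ k) :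
    SpecialLinearGroup.transvection hij (1 : ZMod 2) * SpecialLinearGroup.transvection hjk 1 =
      SpecialLinearGroup.transvection hik 1 *
        (SpecialLinearGroup.transvection hjk 1 * SpecialLinearGroup.transvection hij 1) := by
  apply Subtype.ext
  change ((1 : Matrix (Fin n) (Fin n) (ZMod 2)) + single i j 1) * (1 + single j k 1) =
    (1 + single i k 1) * ((1 + single j k 1) * (1 + single i j 1))
  simp [mul_add, add_mul, single_mul_single_of_ne _ _ _ _ hik.symm,
    single_mul_single_of_ne _ _ _ _ hjk.symm, single_mul_single_of_ne _ _ _ _ hij.symm]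
  abel

open Matrix in
lemma transvection_mem_aux {n : ℕ} [NeZero n] (hn : 3 < n)
    (H : Subgroup (SpecialLinearGroup (Fin n) (ZMod 2)))
    (hH : ∀ (i : Fin n) (h : i ≠ i - 1), SpecialLinearGroup.transvection h 1 ∈ H) (k : ℕ) :
    ∀ (i j : Fin n) (h : i ≠ j), (i - j).val = k → SpecialLinearGroup.transvection h 1 ∈ H := by
  induction k with
  | zero =>
    intro i j h hk
    exact absurd (sub_eq_zero.1 (Fin.val_eq_zero_iff.1 hk)) h
  | succ k ih =>
    intro i j h hk
    have hne : i - j ≠ 0 := sub_ne_zero.2 h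
    have hj : ∃ m : Fin n, j = m - 1 := ⟨j + 1, by simp⟩
    obtain ⟨m, rfl⟩ := hj
    by_cases hm : i = m
    · subst hm
      exact hH i h
    · have h1 : m ≠ m - 1 := by
        intro h2
        have h3 : (1 : Fin n) = 0 := by
          have := sub_eq_self.1 h2.symm
          exact this
        have h4 := congrArg Fin.val h3
        rw [Fin.val_one', Fin.val_zero, Nat.mod_eq_of_lt (by omega)] at h4
        omega
      have h5 : (i - m).val = k := by
        have e : i - m = (i - (m - 1)) - 1 := by abel
        rw [e, Fin.val_sub_one_of_ne_zero hne, hk]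
        rfl
      have c := transvection_comm_aux hm h1 h
      rw [← mul_inv_eq_iff_eq_mul] at c
      rw [← c]
      have a := ih i m hm h5
      have b := hH m h1
      exact H.mul_mem (H.mul_mem a b) (H.inv_mem (H.mul_mem b a))

/-- The dynamics group of Wolfram rule 60 (each local function
replaces `y i` by `y (i-1) + y i`) is isomorphic to `SL_n(F_2)`. -/
theorem stmt_6 {n : ℕ} [NeZero n] (hn : 3 < n)
    (A : Fin n → Equiv.Perm (Fin n → ZMod 2))
    (hA : ∀ (i : Fin n) (y : Fin n → ZMod 2),
      A i y = Function.update y i (y (i - 1) + y i)) :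
    Nonempty (↥(Subgroup.closure (Set.range A)) ≃*
      Matrix.SpecialLinearGroup (Fin n) (ZMod 2)) := by
  let φ : Matrix.SpecialLinearGroup (Fin n) (ZMod 2) →* Equiv.Perm (Fin n → ZMod 2) :=
    MulAction.toPermHom _ _
  have hφ : ∀ M y, φ M y = Matrix.mulVec M.1 y := fun M y => rfl
  have hinj : Function.Injective φ := by
    intro M N h
    apply Subtype.ext
    apply Matrix.toLin'.injective
    ext1 i
    ext1
    have := congrArg (fun e => e (Pi.single i 1)) h
    simp only [hφ] at this
    simpa using this
  have hne : ∀ m : Fin n, m ≠ m - 1 := by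
    intro m h2
    have h4 := congrArg Fin.val (sub_eq_self.1 h2.symm)
    rw [Fin.val_one', Fin.val_zero, Nat.mod_eq_of_lt (by omega)] at h4
    omega
  have hgen : ∀ i, φ (Matrix.SpecialLinearGroup.transvection (hne i) 1) = A i := by
    intro i
    ext1 y
    rw [hφ, hA, Matrix.SpecialLinearGroup.transvection_coe, Matrix.add_mulVec, Matrix.one_mulVec,
      Matrix.single_mulVec]
    ext1 k
    by_cases hk : k = i
    · subst hk; simp [add_comm]
    · simp [hk]
  have hrange : φ.range = Subgroup.closure (Set.range A) := by
    apply le_antisymm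
    · rintro _ ⟨M, rfl⟩
      have : Nontrivial (Fin n) := ⟨⟨0, 0 - 1, hne 0⟩⟩
      have htr := transvection_mem_aux hn ((Subgroup.closure (Set.range A)).comap φ)
        (fun i h => by
          rw [Subgroup.mem_comap, hgen]
          exact Subgroup.subset_closure ⟨i, rfl⟩)
      have h01 : ∀ c : ZMod 2, c = 0 ∨ c = 1 := by decide
      change M ∈ (Subgroup.closure (Set.range A)).comap φ
      induction M using Matrix.SpecialLinearGroup.diagonal_transvection_induction' with
      | hdiag i j hij hc =>
        rename_i c
        have hc1 : c = 1 := (h01 c).resolve_left hc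
        subst hc1
        convert Subgroup.one_mem _
        apply Subtype.ext
        rw [Matrix.SpecialLinearGroup.diag2n_coe]
        simp
      | htransvec i j hij a =>
        rcases h01 a with rfl | rfl
        · rw [Matrix.SpecialLinearGroup.transvection_coeff_zero]
          exact Subgroup.one_mem _
        · exact htr _ i j hij rfl
      | hmul A B ha hb => exact Subgroup.mul_mem _ ha hb
    · rw [Subgroup.closure_le]
      rintro _ ⟨i, rfl⟩
      exact ⟨_, hgen i⟩
  exact ⟨((MonoidHom.ofInjective hinj).trans (MulEquiv.subgroupCongr hrange)).symm⟩
end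

section
/- Fix n > 3. For each i : Fin n let R_i be the permutation of states (Fin n → ZMod 2) that replaces y_i by y_{i−1} + y_i + y_{i+1} and leaves all other coordinates unchanged (the Wolfram rule 150 local function at i; each R_i is an involution). Let G₁₅₀ be the subgroup of the permutation group of (Fin n → ZMod 2) generated by {R_i ∣ i : Fin n}. Then the order of G₁₅₀ equals 2^{n−1}·n! when n is odd, and equals 2^{n−2}·n! when n is even. -/
namespace Rule150

open Equiv

/-- Edge differences. -/
def d {m : ℕ} (y : Fin (m+1) → ZMod 2) (i : Fin (m+1)) : ZMod 2 := y i + y (i + 1)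

/-- `g` acts on differences by `σ` and shifts the base coordinate by `a`. -/
def P {m : ℕ} (g : Perm (Fin (m+1) → ZMod 2)) (a : Fin (m+1) → ZMod 2)
    (σ : Perm (Fin (m+1))) : Prop :=
  ∀ y, (∀ i, d (g y) (σ i) = d y i) ∧ (g y) 0 = y 0 + ∑ i, a i * d y i

lemma two_self (x : ZMod 2) : x + x = 0 := CharTwo.add_self_eq_zero x

lemma app_inv {α : Type*} (σ : Perm α) (x : α) : σ (σ⁻¹ x) = x := σ.apply_symm_apply x

lemma inv_app {α : Type*} (σ : Perm α) (x : α) : σ⁻¹ (σ x) = x := σ.symm_apply_apply x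

variable {m : ℕ}

lemma sum_d (y : Fin (m+1) → ZMod 2) : ∑ i, d y i = 0 := by
  unfold d
  have h : ∑ i, y (i + 1) = ∑ i, y i := Equiv.sum_comp (Equiv.addRight (1 : Fin (m+1))) y
  rw [Finset.sum_add_distrib, h]
  exact two_self _

lemma ext_d {y z : Fin (m+1) → ZMod 2} (h0 : y 0 = z 0) (h : ∀ i, d y i = d z i) : y = z := by
  funext i
  induction i using Fin.induction with
  | zero => exact h0
  | succ i ih =>
    have := h i.castSucc
    unfold d at this
    rw [Fin.coeSucc_eq_succ, ih] at this
    exact add_left_cancel this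

lemma P_unique {g h : Perm (Fin (m+1) → ZMod 2)} {a σ} (hg : P g a σ) (hh : P h a σ) : g = h := by
  ext1 y
  apply ext_d
  · rw [(hg y).2, (hh y).2]
  · intro i
    have h1 := (hg y).1 (σ⁻¹ i)
    have h2 := (hh y).1 (σ⁻¹ i)
    rw [app_inv] at h1 h2
    rw [h1, h2]

lemma P_one : P (1 : Perm (Fin (m+1) → ZMod 2)) 0 1 := by
  intro y; simp

lemma P_mul {g h : Perm (Fin (m+1) → ZMod 2)} {a b σ τ} (hg : P g a σ) (hh : P h b τ) :
    P (g * h) (fun i => b i + a (τ i)) (σ * τ) := by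
  intro y
  refine ⟨fun i => ?_, ?_⟩
  · rw [Perm.mul_apply, Perm.mul_apply, (hg _).1, (hh _).1]
  · rw [Perm.mul_apply, (hg _).2, (hh _).2, ← Equiv.sum_comp τ (fun i => a i * d (h y) i)]
    simp only [(hh y).1, add_mul, Finset.sum_add_distrib, add_assoc]

lemma P_inv {g : Perm (Fin (m+1) → ZMod 2)} {a σ} (hg : P g a σ) :
    P g⁻¹ (fun i => a (σ⁻¹ i)) σ⁻¹ := by
  intro y
  obtain ⟨z, rfl⟩ := g.surjective y
  rw [inv_app]
  refine ⟨fun i => ?_, ?_⟩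
  · rw [← (hg z).1, app_inv]
  · rw [← Equiv.sum_comp σ (fun i => a (σ⁻¹ i) * d (g z) i)]
    simp only [(hg z).1, inv_app]
    rw [(hg z).2, add_assoc, two_self, add_zero]

lemma P_const {g : Perm (Fin (m+1) → ZMod 2)} {a σ} (hg : P g a σ) (c : ZMod 2) :
    P g (fun i => a i + c) σ := by
  intro y
  refine ⟨(hg y).1, ?_⟩
  rw [(hg y).2]
  simp only [add_mul, Finset.sum_add_distrib, ← Finset.mul_sum, sum_d, mul_zero, add_zero]

lemma one_ne (hm : 2 ≤ m) : (1 : Fin (m+1)) ≠ 0 := by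
  intro h
  have := congrArg Fin.val h
  rw [Fin.val_one', Fin.val_zero, Nat.mod_eq_of_lt (by omega)] at this
  omega

lemma two_ne (hm : 2 ≤ m) : (1 + 1 : Fin (m+1)) ≠ 0 := by
  intro h
  have := congrArg Fin.val h
  simp [Fin.val_add] at this
  rw [Nat.mod_eq_of_lt (by omega)] at this
  omega

lemma d_single (k i : Fin (m+1)) :
    d (Pi.single k 1) i = (if i = k then 1 else 0) + (if i = k - 1 then 1 else 0) := by
  simp only [d, Pi.single_apply, eq_sub_iff_add_eq]

lemma P_sigma (hm : 2 ≤ m) {g : Perm (Fin (m+1) → ZMod 2)} {a b σ τ}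
    (h1 : P g a σ) (h2 : P g b τ) : σ = τ := by
  have key : ∀ y i, d y i = d y (τ⁻¹ (σ i)) := by
    intro y i
    rw [← (h1 y).1, ← (h2 y).1, app_inv]
  have h01 := one_ne hm
  have h02 := two_ne hm
  ext1 i
  have e1 := key (Pi.single i 1) i
  have e2 := key (Pi.single (i+1) 1) i
  rw [← Perm.inv_eq_iff_eq (f := τ), eq_comm] 
  generalize τ⁻¹ (σ i) = j at *
  simp only [d_single] at e1 e2
  have n1 : i ≠ i - 1 := by intro h; exact h01 (sub_eq_self.mp h.symm)
  have n2 : i ≠ i + 1 := by intro h; exact h01 (left_eq_add.mp h)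
  have n3 : i - 1 ≠ i + 1 := by
    intro h; apply h02
    have := sub_eq_iff_eq_add.mp h
    rw [add_assoc] at this
    exact left_eq_add.mp this
  rw [add_sub_cancel_right] at e2
  by_contra hj'
  have hj : j ≠ i := fun h => hj' h.symm
  simp only [if_true, if_neg n1, if_neg n2, if_neg hj] at e1 e2
  by_cases hj1 : j = i - 1
  · rw [if_neg (by rw [hj1]; exact n3)] at e2; simp at e2
  · rw [if_neg hj1] at e1; simp at e1

lemma P_a (hm : 2 ≤ m) {g : Perm (Fin (m+1) → ZMod 2)} {a b σ τ}
    (h1 : P g a σ) (h2 : P g b τ) (i) : a i + b i = a 0 + b 0 := by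
  induction i using Fin.induction with
  | zero => rfl
  | succ i ih =>
    rw [← ih]
    have e := (h1 (Pi.single i.succ 1)).2.symm.trans (h2 (Pi.single i.succ 1)).2
    have hs : i.succ - 1 = i.castSucc := by
      rw [sub_eq_iff_eq_add, Fin.coeSucc_eq_succ]
    simp only [d_single, mul_add, Finset.sum_add_distrib, mul_ite, mul_one, mul_zero,
      Finset.sum_ite_eq', Finset.mem_univ, if_true, hs] at e
    have e := add_left_cancel e
    generalize a i.succ = p at *
    generalize a i.castSucc = q at *
    generalize b i.succ = r at *
    generalize b i.castSucc = s at *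
    revert e; clear * -; revert p q r s; decide

lemma P_R (R : Fin (m+1) → Perm (Fin (m+1) → ZMod 2))
    (hR : ∀ (i : Fin (m+1)) (y : Fin (m+1) → ZMod 2),
      R i y = Function.update y i (y (i - 1) + y i + y (i + 1)))
    (hm : 2 ≤ m) (i : Fin (m+1)) :
    P (R i) (if i = 0 then Pi.single (-1) 1 + Pi.single 0 1 else 0) (swap (i-1) i) := by
  have h01 := one_ne hm
  have h02 := two_ne hm
  have n1 : i ≠ i - 1 := by intro h; exact h01 (sub_eq_self.mp h.symm)
  have n2 : i + 1 ≠ i := by intro h; exact h01 (add_eq_left.mp h)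
  have n3 : i + 1 ≠ i - 1 := by
    intro h; apply h02
    have := sub_eq_iff_eq_add.mp h.symm
    rw [add_assoc] at this
    exact left_eq_add.mp this
  have c2 : ∀ p q r : ZMod 2, p + (q + p + r) = q + r := by decide
  intro y
  rw [hR]
  refine ⟨fun j => ?_, ?_⟩
  · unfold d
    by_cases hj : j = i
    · subst hj
      rw [swap_apply_right, sub_add_cancel, Function.update_self,
        Function.update_of_ne n1.symm]
      generalize y (j-1) = p
      generalize y j = q
      generalize y (j+1) = r
      revert p q r; decide
    · by_cases hj1 : j = i - 1
      · subst hj1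
        rw [swap_apply_left, sub_add_cancel, Function.update_self,
          Function.update_of_ne n2]
        generalize y (i-1) = p
        generalize y i = q
        generalize y (i+1) = r
        revert p q r; decide
      · rw [swap_apply_of_ne_of_ne hj1 hj, Function.update_of_ne hj, Function.update_of_ne]
        intro h; exact hj1 (eq_sub_of_add_eq h)
  · by_cases hi : i = 0
    · subst hi
      simp only [if_true, Function.update_self, Pi.add_apply, add_mul, Finset.sum_add_distrib,
        Pi.single_apply, ite_mul, one_mul, zero_mul, Finset.sum_ite_eq', Finset.mem_univ, d]
      rw [zero_sub, neg_add_cancel]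
      generalize y (-1) = p
      generalize y 0 = q
      generalize y (0+1) = r
      revert p q r; decide
    · rw [if_neg hi, Function.update_of_ne (Ne.symm hi)]
      simp

lemma closure_P (R : Fin (m+1) → Perm (Fin (m+1) → ZMod 2))
    (hR : ∀ (i : Fin (m+1)) (y : Fin (m+1) → ZMod 2),
      R i y = Function.update y i (y (i - 1) + y i + y (i + 1)))
    (hm : 2 ≤ m) {g} (hg : g ∈ Subgroup.closure (Set.range R)) :
    ∃ a σ, ∑ i, a i = 0 ∧ P g a σ := by
  induction hg using Subgroup.closure_induction with
  | mem x hx =>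
    obtain ⟨i, rfl⟩ := hx
    refine ⟨_, _, ?_, P_R R hR hm i⟩
    split_ifs
    · simp [Finset.sum_add_distrib, two_self]
    · simp
  | one => exact ⟨0, 1, by simp, P_one⟩
  | mul x y _ _ hx hy =>
    obtain ⟨a, σ, ha, hx⟩ := hx
    obtain ⟨b, τ, hb, hy⟩ := hy
    refine ⟨_, _, ?_, P_mul hx hy⟩
    rw [Finset.sum_add_distrib, Equiv.sum_comp τ a, ha, hb, add_zero]
  | inv x _ hx =>
    obtain ⟨a, σ, ha, hx⟩ := hx
    refine ⟨_, _, ?_, P_inv hx⟩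
    rw [Equiv.sum_comp σ⁻¹ a, ha]

lemma exists_sigma (R : Fin (m+1) → Perm (Fin (m+1) → ZMod 2))
    (hR : ∀ (i : Fin (m+1)) (y : Fin (m+1) → ZMod 2),
      R i y = Function.update y i (y (i - 1) + y i + y (i + 1)))
    (hm : 2 ≤ m) (σ : Perm (Fin (m+1))) :
    ∃ g ∈ Subgroup.closure (Set.range R), P g 0 σ := by
  have hσ : σ ∈ Submonoid.closure
      (Set.range fun i : Fin m => swap i.castSucc i.succ) := by
    rw [Equiv.Perm.mclosure_swap_castSucc_succ]; trivial
  induction hσ using Submonoid.closure_induction with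
  | mem x hx =>
    obtain ⟨i, rfl⟩ := hx
    refine ⟨R i.succ, Subgroup.subset_closure ⟨_, rfl⟩, ?_⟩
    have := P_R R hR hm i.succ
    have hs : i.succ - 1 = i.castSucc := by
      rw [sub_eq_iff_eq_add, Fin.coeSucc_eq_succ]
    rwa [if_neg (Fin.succ_ne_zero i), hs] at this
  | one => exact ⟨1, one_mem _, P_one⟩
  | mul x y _ _ hx hy =>
    obtain ⟨g, hg, hx⟩ := hx
    obtain ⟨h, hh, hy⟩ := hy
    refine ⟨g * h, mul_mem hg hh, ?_⟩
    convert P_mul hx hy using 1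
    funext i; simp

lemma exists_pair (R : Fin (m+1) → Perm (Fin (m+1) → ZMod 2))
    (hR : ∀ (i : Fin (m+1)) (y : Fin (m+1) → ZMod 2),
      R i y = Function.update y i (y (i - 1) + y i + y (i + 1)))
    (hm : 2 ≤ m) (i : Fin (m+1)) :
    ∃ g ∈ Subgroup.closure (Set.range R), P g (Pi.single i 1 + Pi.single 0 1) 1 := by
  by_cases hi : i = 0
  · subst hi
    refine ⟨1, one_mem _, ?_⟩
    convert P_one using 1
    funext j; exact two_self _
  have hneg : (-1 : Fin (m+1)) ≠ 0 := neg_ne_zero.mpr (one_ne hm)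
  obtain ⟨s, hs, hs'⟩ := exists_sigma R hR hm (swap (-1) 0)
  obtain ⟨t, ht, ht'⟩ := exists_sigma R hR hm (swap (-1) i)
  have h0 := P_R R hR hm 0
  rw [if_pos rfl, zero_sub] at h0
  have h1 := P_mul hs' h0
  have h2 := P_mul (P_mul ht' h1) (P_inv ht')
  refine ⟨t * (s * R 0) * t⁻¹, mul_mem (mul_mem ht (mul_mem hs
    (Subgroup.subset_closure ⟨0, rfl⟩))) (inv_mem ht), ?_⟩
  convert h2 using 1
  · funext j
    simp only [Pi.zero_apply, add_zero, zero_add, Pi.add_apply, Pi.single_apply, swap_inv]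
    congr 1
    · simp [Equiv.swap_apply_eq_iff]
    · simp only [Equiv.swap_apply_eq_iff, swap_apply_of_ne_of_ne hneg.symm (Ne.symm hi)]
  · rw [swap_mul_self]; simp

lemma exists_all (R : Fin (m+1) → Perm (Fin (m+1) → ZMod 2))
    (hR : ∀ (i : Fin (m+1)) (y : Fin (m+1) → ZMod 2),
      R i y = Function.update y i (y (i - 1) + y i + y (i + 1)))
    (hm : 2 ≤ m) (a : Fin (m+1) → ZMod 2) (ha : ∑ i, a i = 0)
    (σ : Perm (Fin (m+1))) :
    ∃ g ∈ Subgroup.closure (Set.range R), P g a σ := by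
  have key : ∀ s : Finset (Fin (m+1)), ∃ g ∈ Subgroup.closure (Set.range R),
      P g (∑ i ∈ s, a i • (Pi.single i 1 + Pi.single 0 1)) 1 := by
    intro s
    induction s using Finset.induction_on with
    | empty => exact ⟨1, one_mem _, by simpa using P_one⟩
    | insert i s hi ih =>
      obtain ⟨g, hg, hg'⟩ := ih
      obtain ⟨t, ht, ht'⟩ := exists_pair R hR hm i
      rw [Finset.sum_insert hi]
      have h01 : a i = 0 ∨ a i = 1 := by generalize a i = p; revert p; decide
      rcases h01 with h | h
      · refine ⟨g, hg, ?_⟩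
        rwa [h, zero_smul, zero_add]
      · refine ⟨g * t, mul_mem hg ht, ?_⟩
        rw [h, one_smul]
        exact P_mul hg' ht'
  obtain ⟨g, hg, hg'⟩ := key Finset.univ
  obtain ⟨h, hh, hh'⟩ := exists_sigma R hR hm σ
  refine ⟨h * g, mul_mem hh hg, ?_⟩
  convert P_mul hh' hg' using 1
  · funext j
    simp only [smul_add, Finset.sum_add_distrib, ← Finset.sum_smul, ha, zero_smul, add_zero,
      Pi.zero_apply]
    simp [Finset.sum_apply, Pi.single_apply]
  · rw [mul_one]

lemma card_of_param (R : Fin (m+1) → Perm (Fin (m+1) → ZMod 2))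
    (hR : ∀ (i : Fin (m+1)) (y : Fin (m+1) → ZMod 2),
      R i y = Function.update y i (y (i - 1) + y i + y (i + 1)))
    (hm : 2 ≤ m) {k : ℕ} (F : (Fin k → ZMod 2) → Fin (m+1) → ZMod 2)
    (hF : ∀ b, ∑ i, F b i = 0)
    (hinj : ∀ b b', (∀ i, F b i + F b' i = F b 0 + F b' 0) → b = b')
    (hsurj : ∀ a : Fin (m+1) → ZMod 2, ∑ i, a i = 0 → ∃ b c, F b = fun i => a i + c) :
    Nat.card ↥(Subgroup.closure (Set.range R)) = 2 ^ k * Nat.factorial (m+1) := by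
  choose f hf hf' using fun x : (Fin k → ZMod 2) × Perm (Fin (m+1)) =>
    exists_all R hR hm (F x.1) (hF x.1) x.2
  let f' : (Fin k → ZMod 2) × Perm (Fin (m+1)) → ↥(Subgroup.closure (Set.range R)) :=
    fun x => ⟨f x, hf x⟩
  have hb : Function.Bijective f' := by
    constructor
    · rintro ⟨b, σ⟩ ⟨b', σ'⟩ h
      have h : f (b, σ) = f (b', σ') := congrArg Subtype.val h
      have h1 := hf' (b, σ)
      have h2 := hf' (b', σ')
      rw [← h] at h2
      exact Prod.ext (hinj _ _ (P_a hm h1 h2)) (P_sigma hm h1 h2)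
    · rintro ⟨g, hg⟩
      obtain ⟨a, σ, ha, hP⟩ := closure_P R hR hm hg
      obtain ⟨b, c, hbc⟩ := hsurj a ha
      refine ⟨(b, σ), Subtype.ext ?_⟩
      refine P_unique (hf' (b, σ)) ?_
      simp only [hbc]
      exact P_const hP c
  rw [← Nat.card_congr (Equiv.ofBijective f' hb)]
  simp [Nat.card_eq_fintype_card, Fintype.card_perm, ZMod.card]

end Rule150

open Rule150

/-- The order of the dynamics group of Wolfram rule 150 (each local
function replaces `y i` by `y (i-1) + y i + y (i+1)`) is `2^(n-1) * n!` for odd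
`n` and `2^(n-2) * n!` for even `n`. -/
theorem stmt_7 {n : ℕ} [NeZero n] (hn : 3 < n)
    (R : Fin n → Equiv.Perm (Fin n → ZMod 2))
    (hR : ∀ (i : Fin n) (y : Fin n → ZMod 2),
      R i y = Function.update y i (y (i - 1) + y i + y (i + 1))) :
    (Odd n → Nat.card ↥(Subgroup.closure (Set.range R))
      = 2 ^ (n - 1) * Nat.factorial n) ∧
    (Even n → Nat.card ↥(Subgroup.closure (Set.range R))
      = 2 ^ (n - 2) * Nat.factorial n) := by
  have c0 : ∀ p q : ZMod 2, p + q = 0 → p = q := by decide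
  obtain ⟨k, rfl⟩ : ∃ k, n = k + 2 := ⟨n - 2, by omega⟩
  constructor
  · intro hodd
    refine card_of_param (m := k+1) R hR (by omega) (k := k+1)
      (fun b => Fin.cons (∑ i, b i) b) ?_ ?_ ?_
    · intro b
      rw [Fin.sum_univ_succ]
      simp [two_self]
    · intro b b' h
      have hs := Finset.sum_congr (rfl : (Finset.univ : Finset (Fin (k+1+1))) = _)
        (fun i _ => h i)
      have hz : ∀ b : Fin (k+1) → ZMod 2,
          ∑ i, (Fin.cons (∑ i, b i) b : Fin (k+1+1) → ZMod 2) i = 0 := by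
        intro b
        rw [Fin.sum_univ_succ]
        simp [two_self]
      have hc : ((k + 1 + 1 : ℕ) : ZMod 2) = 1 := (ZMod.natCast_eq_one_iff_odd).mpr hodd
      rw [Finset.sum_add_distrib, hz, hz, Finset.sum_const, Finset.card_univ, Fintype.card_fin,
        nsmul_eq_mul, hc, one_mul, add_zero] at hs
      simp only [Fin.cons_zero] at hs
      funext i
      have := h i.succ
      simp only [Fin.cons_zero, Fin.cons_succ] at this
      exact c0 _ _ (this.trans hs.symm)
    · intro a ha
      refine ⟨fun i => a i.succ, 0, ?_⟩
      rw [Fin.sum_univ_succ] at ha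
      funext i
      rw [add_zero]
      cases i using Fin.cases with
      | zero => exact (c0 _ _ ha).symm
      | succ i => rfl
  · intro heven
    have hc : ((k + 1 + 1 : ℕ) : ZMod 2) = 0 := (ZMod.natCast_eq_zero_iff_even).mpr heven
    refine card_of_param (m := k+1) R hR (by omega) (k := k)
      (fun b => Fin.cons 0 (Fin.cons (∑ i, b i) b : Fin (k+1) → ZMod 2)) ?_ ?_ ?_
    · intro b
      rw [Fin.sum_univ_succ, Fin.sum_univ_succ]
      simp [two_self]
    · intro b b' h
      funext i
      have := h i.succ.succ
      simp only [Fin.cons_zero, Fin.cons_succ, add_zero] at this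
      exact c0 _ _ this
    · intro a ha
      refine ⟨fun i => a i.succ.succ + a 0, a 0, ?_⟩
      have ha' : ∑ i, (a i + a 0) = 0 := by
        rw [Finset.sum_add_distrib, ha]
        simp only [Finset.sum_const, Finset.card_univ, Fintype.card_fin]
        rw [nsmul_eq_mul, hc, zero_mul, add_zero]
      rw [Fin.sum_univ_succ, Fin.sum_univ_succ, two_self, zero_add] at ha'
      funext i
      cases i using Fin.cases with
      | zero => exact (two_self _).symm
      | succ i =>
        cases i using Fin.cases with
        | zero => exact (c0 _ _ ha').symm
        | succ i => rfl
end

section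
/- Fix n > 3. For each i : Fin n let Q_i be the permutation of states (Fin n → ZMod 2) that replaces y_i by 1 + y_{i−1} + y_i + y_{i+1} and leaves all other coordinates unchanged (the Wolfram rule 105 local function at i; each Q_i is an involution). Let G₁₀₅ be the subgroup of the permutation group of (Fin n → ZMod 2) generated by {Q_i ∣ i : Fin n}. Then the order of G₁₀₅ equals 2^{n−1}·n! when 4 does not divide n, and equals 2^{n−2}·n! when 4 divides n. -/
open Finset

/-- Signed permutations over `ZMod 2`. -/
@[ext] structure BW (n : ℕ) where
  v : Fin n → ZMod 2
  s : Equiv.Perm (Fin n)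

namespace BW
variable {n : ℕ}

instance : Mul (BW n) := ⟨fun a b => ⟨fun j => a.v j + b.v (a.s⁻¹ j), a.s * b.s⟩⟩
instance : One (BW n) := ⟨⟨0, 1⟩⟩
instance : Inv (BW n) := ⟨fun a => ⟨fun j => a.v (a.s j), a.s⁻¹⟩⟩

@[simp] theorem mul_v (a b : BW n) (j : Fin n) : (a * b).v j = a.v j + b.v (a.s⁻¹ j) := rfl
@[simp] theorem mul_s (a b : BW n) : (a * b).s = a.s * b.s := rfl
@[simp] theorem one_v : (1 : BW n).v = 0 := rfl
@[simp] theorem one_s : (1 : BW n).s = 1 := rfl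
@[simp] theorem inv_v (a : BW n) (j : Fin n) : (a⁻¹).v j = a.v (a.s j) := rfl
@[simp] theorem inv_s (a : BW n) : (a⁻¹).s = a.s⁻¹ := rfl

instance : Group (BW n) := Group.ofLeftAxioms
  (by
    intro a b c
    ext j
    · simp [add_assoc]
    · simp)
  (by
    intro a
    ext j
    · simp
    · simp)
  (by
    intro a
    ext j
    · simp [CharTwo.add_self_eq_zero]
    · simp)

/-- The equivalence with pairs. -/
def eqv : BW n ≃ (Fin n → ZMod 2) × Equiv.Perm (Fin n) :=
  ⟨fun a => (a.v, a.s), fun p => ⟨p.1, p.2⟩, fun _ => rfl, fun _ => rfl⟩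

instance : Finite (BW n) := Finite.of_equiv _ eqv.symm

theorem card_BW : Nat.card (BW n) = 2 ^ n * n.factorial := by
  rw [Nat.card_congr eqv, Nat.card_prod]
  simp [Nat.card_eq_fintype_card, Fintype.card_perm, ZMod.card]

/-- The sum of the signs. -/
def sgn : BW n →* Multiplicative (ZMod 2) where
  toFun a := Multiplicative.ofAdd (∑ j, a.v j)
  map_one' := by simp
  map_mul' a b := by
    simp only [mul_v, sum_add_distrib, ofAdd_add]
    congr 2
    exact Equiv.sum_comp (a.s⁻¹) b.v

theorem mem_ker_sgn (a : BW n) : a ∈ (sgn (n := n)).ker ↔ ∑ j, a.v j = 0 := by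
  rw [MonoidHom.mem_ker]
  exact Iff.rfl

theorem card_ker [NeZero n] : 2 * Nat.card (sgn (n := n)).ker = 2 ^ n * n.factorial := by
  have h1 := (sgn (n := n)).ker.card_mul_index
  have hs : Function.Surjective (sgn (n := n)) := by
    intro x
    refine ⟨⟨Pi.single 0 x.toAdd, 1⟩, ?_⟩
    apply Multiplicative.toAdd.injective
    show ∑ j, Pi.single (M := fun _ => ZMod 2) (0 : Fin n) x.toAdd j = _
    simp
  rw [Subgroup.index_ker, MonoidHom.range_eq_top.2 hs, card_BW] at h1
  have : Nat.card (⊤ : Subgroup (Multiplicative (ZMod 2))) = 2 := by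
    rw [Subgroup.card_top]
    simp [Nat.card_eq_fintype_card, Fintype.card_multiplicative, ZMod.card]
  rw [this] at h1
  omega

/-- The generators. -/
def gen [NeZero n] (i : Fin n) : BW n :=
  ⟨if i = 0 then Pi.single (0 - 1) 1 + Pi.single 0 1 else 0, Equiv.swap (i - 1) i⟩

theorem zmod2_cases (x : ZMod 2) : x = 0 ∨ x = 1 := by
  revert x; decide

theorem closure_gen [NeZero n] (hn : 3 < n) :
    Subgroup.closure (Set.range (gen (n := n))) = (sgn (n := n)).ker := by
  obtain ⟨m, rfl⟩ : ∃ m, n = m + 1 := ⟨n - 1, by omega⟩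
  have hm : (0 - 1 : Fin (m+1)) ≠ 0 := by
    intro h
    have := congrArg (· + 1) h
    simp only [sub_add_cancel, zero_add] at this
    have h2 := congrArg Fin.val this
    rw [Fin.val_one'] at h2
    rw [Nat.mod_eq_of_lt (by omega)] at h2
    simp at h2
  apply le_antisymm
  · rw [Subgroup.closure_le]
    rintro _ ⟨i, rfl⟩
    rw [SetLike.mem_coe, mem_ker_sgn]
    unfold gen
    by_cases h : i = 0
    · simp [h, sum_add_distrib, CharTwo.add_self_eq_zero]
    · simp [h]
  · set H := Subgroup.closure (Set.range (gen (n := m+1))) with hH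
    have hgen : ∀ i, gen i ∈ H := fun i => Subgroup.subset_closure ⟨i, rfl⟩
    -- permutations
    have hperm : ∀ σ : Equiv.Perm (Fin (m+1)), (⟨0, σ⟩ : BW (m+1)) ∈ H := by
      intro σ
      have hσ : σ ∈ Submonoid.closure
          (Set.range fun i : Fin m => Equiv.swap i.castSucc i.succ) := by
        rw [Equiv.Perm.mclosure_swap_castSucc_succ]; trivial
      induction hσ using Submonoid.closure_induction with
      | mem x hx =>
        obtain ⟨i, rfl⟩ := hx
        have := hgen i.succ
        unfold gen at this
        rw [if_neg (Fin.succ_ne_zero i)] at this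
        have h2 : i.succ - 1 = i.castSucc := by
          rw [sub_eq_iff_eq_add, Fin.coeSucc_eq_succ]
        rw [h2] at this
        exact this
      | one => exact H.one_mem
      | mul x y _ _ hx hy =>
        convert H.mul_mem hx hy using 1
        ext j
        · simp
        · simp
    have hconj : ∀ (v : Fin (m+1) → ZMod 2) (σ : Equiv.Perm (Fin (m+1))),
        (⟨v, 1⟩ : BW (m+1)) ∈ H → (⟨fun j => v (σ⁻¹ j), 1⟩ : BW (m+1)) ∈ H := by
      intro v σ hv
      convert H.mul_mem (H.mul_mem (hperm σ) hv) (H.inv_mem (hperm σ)) using 1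
      ext j
      · simp
      · simp
    have h0 : (⟨Pi.single (0 - 1) 1 + Pi.single 0 1, 1⟩ : BW (m+1)) ∈ H := by
      convert H.mul_mem (hgen 0) (hperm (Equiv.swap (0 - 1) 0)) using 1
      ext j
      · simp [gen]
      · simp [gen]
    have h1 : ∀ j : Fin (m+1), (⟨Pi.single j 1 + Pi.single 0 1, 1⟩ : BW (m+1)) ∈ H := by
      intro j
      by_cases hj : j = 0
      · subst hj
        convert H.one_mem using 1
        ext k
        · simp [CharTwo.add_self_eq_zero]
        · simp
      · convert hconj _ (Equiv.swap (0 - 1) j) h0 using 1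
        ext k
        · simp only [Equiv.swap_inv, Pi.add_apply, Pi.single_apply]
          have e1 : (Equiv.swap (0 - 1) j k = 0 - 1) ↔ k = j := by
            rw [Equiv.swap_apply_eq_iff, Equiv.swap_apply_left]
          have e2 : (Equiv.swap (0 - 1) j k = 0) ↔ k = 0 := by
            rw [Equiv.swap_apply_eq_iff, Equiv.swap_apply_of_ne_of_ne hm.symm (Ne.symm hj)]
          simp only [e1, e2]
        · simp
    have hadd : ∀ (v w : Fin (m+1) → ZMod 2),
        (⟨v, 1⟩ : BW (m+1)) ∈ H → (⟨w, 1⟩ : BW (m+1)) ∈ H → (⟨v + w, 1⟩ : BW (m+1)) ∈ H := by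
      intro v w hv hw
      convert H.mul_mem hv hw using 1
      ext j
      · simp
      · simp
    have hsum : ∀ (v : Fin (m+1) → ZMod 2) (S : Finset (Fin (m+1))),
        (⟨∑ j ∈ S, v j • (Pi.single j 1 + Pi.single 0 1), 1⟩ : BW (m+1)) ∈ H := by
      intro v S
      induction S using Finset.induction_on with
      | empty => rw [Finset.sum_empty]; exact H.one_mem
      | insert a S ha ih =>
        rw [Finset.sum_insert ha]
        apply hadd _ _ _ ih
        rcases zmod2_cases (v a) with h | h
        · rw [h, zero_smul]; exact H.one_mem
        · rw [h, one_smul]; exact h1 a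
    intro a ha
    rw [mem_ker_sgn] at ha
    convert H.mul_mem (hsum a.v univ) (hperm a.s) using 1
    ext k
    · simp only [mul_v, Finset.sum_apply, Pi.smul_apply, Pi.add_apply, smul_eq_mul, mul_add,
        sum_add_distrib, ← Finset.sum_mul, ha]
      simp [Pi.single_apply]
    · simp

end BW

/-- Transfer of cardinalities. -/
theorem card_transfer {W X Y I : Type*} [Group W] [Finite W]
    (act : W → X → X) (act_one : ∀ x, act 1 x = x)
    (act_mul : ∀ a b x, act (a * b) x = act a (act b x))
    (f : Y → X) (hf : Function.Injective f) (g : I → W) (Q : I → Equiv.Perm Y)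
    (h : ∀ i y, f (Q i y) = act (g i) (f y)) :
    ∃ K : Subgroup (Subgroup.closure (Set.range g)),
      (∀ w, w ∈ K ↔ ∀ y, act w.1 (f y) = f y) ∧
      Nat.card K * Nat.card (Subgroup.closure (Set.range Q))
        = Nat.card (Subgroup.closure (Set.range g)) := by
  have act_inv : ∀ a x x', x' = act a x → x = act a⁻¹ x' := by
    rintro a x _ rfl
    rw [← act_mul, inv_mul_cancel, act_one]
  have ex1 : ∀ w : Subgroup.closure (Set.range g), ∃ p : Subgroup.closure (Set.range Q),
      ∀ y, f (p.1 y) = act w.1 (f y) := by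
    rintro ⟨w, hw⟩
    induction hw using Subgroup.closure_induction with
    | mem x hx =>
      obtain ⟨i, rfl⟩ := hx
      exact ⟨⟨Q i, Subgroup.subset_closure ⟨i, rfl⟩⟩, h i⟩
    | one => exact ⟨1, fun y => by simp [act_one]⟩
    | mul a b _ _ ha hb =>
      obtain ⟨p, hp⟩ := ha
      obtain ⟨q, hq⟩ := hb
      refine ⟨p * q, fun y => ?_⟩
      simp only at hp hq ⊢
      rw [act_mul, ← hq, ← hp]
      rfl
    | inv a _ ha =>
      obtain ⟨p, hp⟩ := ha
      refine ⟨p⁻¹, fun y => act_inv _ _ _ ?_⟩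
      rw [← hp]
      simp
  have ex2 : ∀ p : Subgroup.closure (Set.range Q), ∃ w : Subgroup.closure (Set.range g),
      ∀ y, f (p.1 y) = act w.1 (f y) := by
    rintro ⟨p, hp⟩
    induction hp using Subgroup.closure_induction with
    | mem x hx =>
      obtain ⟨i, rfl⟩ := hx
      exact ⟨⟨g i, Subgroup.subset_closure ⟨i, rfl⟩⟩, h i⟩
    | one => exact ⟨1, fun y => by simp [act_one]⟩
    | mul a b _ _ ha hb =>
      obtain ⟨p, hp⟩ := ha
      obtain ⟨q, hq⟩ := hb
      refine ⟨p * q, fun y => ?_⟩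
      simp only at hp hq ⊢
      rw [Subgroup.coe_mul, act_mul, ← hq, ← hp]
      rfl
    | inv a _ ha =>
      obtain ⟨p, hp⟩ := ha
      refine ⟨p⁻¹, fun y => act_inv _ _ _ ?_⟩
      rw [← hp]
      simp
  choose F hF using ex1
  have uniq : ∀ (p q : Subgroup.closure (Set.range Q)), (∀ y, f (p.1 y) = f (q.1 y)) → p = q := by
    intro p q hpq
    apply Subtype.ext
    apply Equiv.ext
    intro y
    exact hf (hpq y)
  let Φ : Subgroup.closure (Set.range g) →* Subgroup.closure (Set.range Q) :=
    MonoidHom.mk' F (by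
      intro a b
      apply uniq
      intro y
      rw [hF, Subgroup.coe_mul, act_mul, ← hF, ← hF]
      rfl)
  have hs : Function.Surjective Φ := by
    intro p
    obtain ⟨w, hw⟩ := ex2 p
    refine ⟨w, uniq _ _ fun y => ?_⟩
    rw [hw]
    exact hF w y
  refine ⟨Φ.ker, ?_, ?_⟩
  · intro w
    rw [MonoidHom.mem_ker]
    constructor
    · intro hw y
      rw [← hF]
      have : F w = 1 := hw
      rw [this]; rfl
    · intro hw
      apply uniq
      intro y
      have : f ((Φ w).1 y) = act w.1 (f y) := hF w y
      rw [this, hw]; rfl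
  · have h1 := Φ.ker.card_mul_index
    rw [Subgroup.index_ker, MonoidHom.range_eq_top.2 hs, Subgroup.card_top] at h1
    exact h1

/-- The twisted difference coordinates. -/
def cc {n : ℕ} [NeZero n] (y : Fin n → ZMod 2) (j : Fin n) : ZMod 2 :=
  y j + y (j + 1) + (j.val : ZMod 2)

section
variable {n : ℕ} [NeZero n]

theorem one_ne (hn : 3 < n) : (1 : Fin n) ≠ 0 := by
  obtain ⟨m, rfl⟩ : ∃ m, n = m + 1 := ⟨n - 1, by omega⟩
  intro h
  have h2 := congrArg Fin.val h
  rw [Fin.val_one', Nat.mod_eq_of_lt (by omega)] at h2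
  simp at h2

theorem two_ne (hn : 3 < n) : (1 + 1 : Fin n) ≠ 0 := by
  obtain ⟨m, rfl⟩ : ∃ m, n = m + 1 := ⟨n - 1, by omega⟩
  intro h
  have h2 := congrArg Fin.val h
  rw [Fin.val_add, Fin.val_one', Nat.mod_eq_of_lt (a := 1) (by omega),
    Nat.mod_eq_of_lt (by omega)] at h2
  simp at h2

theorem kappa (i : Fin n) : (1 : ZMod 2) + ((i - 1 : Fin n).val : ZMod 2) + (i.val : ZMod 2)
    = if i = 0 then (n : ZMod 2) else 0 := by
  obtain ⟨m, rfl⟩ : ∃ m, n = m + 1 := ⟨n - 1, by have := NeZero.ne n; omega⟩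
  split_ifs with h
  · subst h
    simp [add_comm]
  · obtain ⟨k, rfl⟩ := Fin.exists_succ_eq.2 h
    have h2 : k.succ - 1 = k.castSucc := by
      rw [sub_eq_iff_eq_add, Fin.coeSucc_eq_succ]
    rw [h2]
    simp only [Fin.val_castSucc, Fin.val_succ]
    push_cast
    have : ∀ a : ZMod 2, 1 + a + (a + 1) = 0 := by decide
    exact this _

theorem cc_update (hn : 3 < n) (i : Fin n) (y : Fin n → ZMod 2) (j : Fin n) :
    cc (Function.update y i (1 + y (i - 1) + y i + y (i + 1))) j
     = cc y (Equiv.swap (i - 1) i j) +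
       (n : ZMod 2) * (BW.gen i).v j := by
  have hi : i - 1 ≠ i := by
    intro h; rw [sub_eq_self] at h; exact one_ne hn h
  have hi' : i + 1 ≠ i := by
    intro h; rw [add_eq_left] at h; exact one_ne hn h
  have hv : (n : ZMod 2) * (BW.gen i).v j =
     (if i = 0 then (n : ZMod 2) else 0) * (if j = i - 1 then 1 else if j = i then 1 else 0) := by
    unfold BW.gen
    by_cases h : i = 0
    · subst h
      simp only [if_true, Pi.add_apply, Pi.single_apply]
      by_cases h1 : j = 0 - 1
      · rw [if_pos h1, if_pos h1, if_neg (by rw [h1]; exact hi), add_zero]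
      · rw [if_neg h1, if_neg h1, zero_add]
    · simp [h]
  rw [hv, ← kappa]
  unfold cc
  have two : ∀ a : ZMod 2, a + a = 0 := by decide
  by_cases h1 : j = i - 1
  · subst h1
    simp only [sub_add_cancel, Function.update_self, Function.update_of_ne hi,
      Equiv.swap_apply_left, if_true]
    grind
  · by_cases h2 : j = i
    · subst h2
      simp only [sub_add_cancel, Function.update_self, Function.update_of_ne hi',
        Equiv.swap_apply_right, if_true, h1, if_false]
      grind
    · have h3 : j + 1 ≠ i := by
        rintro rfl; simp at h1
      simp [Function.update_of_ne h2, Function.update_of_ne h3, h1, h2,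
        Equiv.swap_apply_of_ne_of_ne h1 h2]

/-- Action for odd `n`. -/
def actO (w : BW n) (x : (Fin n → ZMod 2) × ZMod 2) : (Fin n → ZMod 2) × ZMod 2 :=
  (fun j => x.1 (w.s⁻¹ j) + w.v j, x.2)

/-- Action for even `n`. -/
def actE (w : BW n) (x : (Fin n → ZMod 2) × ZMod 2) : (Fin n → ZMod 2) × ZMod 2 :=
  (fun j => x.1 (w.s⁻¹ j), x.2 + ∑ j, w.v j * x.1 (w.s⁻¹ j))

theorem actO_mul (a b : BW n) (x) : actO (a * b) x = actO a (actO b x) := by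
  unfold actO
  simp [add_assoc, add_comm]

theorem actE_mul (a b : BW n) (x) : actE (a * b) x = actE a (actE b x) := by
  unfold actE
  simp only [BW.mul_s, mul_inv_rev, Equiv.Perm.coe_mul, Function.comp, BW.mul_v, add_mul,
    sum_add_distrib]
  congr 1
  rw [← Equiv.sum_comp (a.s⁻¹) (fun j => b.v j * x.1 (b.s⁻¹ j))]
  ring

theorem actO_one (x : (Fin n → ZMod 2) × ZMod 2) : actO (1 : BW n) x = x := by
  simp [actO]

theorem actE_one (x : (Fin n → ZMod 2) × ZMod 2) : actE (1 : BW n) x = x := by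
  simp [actE]

/-- Invariant for odd `n`. -/
def fO (y : Fin n → ZMod 2) : (Fin n → ZMod 2) × ZMod 2 := (cc y, ∑ j, y j * y (j + 1))

/-- Coordinates for even `n`. -/
def fE (y : Fin n → ZMod 2) : (Fin n → ZMod 2) × ZMod 2 := (cc y, y 0)

theorem cc_inj {y y' : Fin n → ZMod 2} (h : cc y = cc y') (j : Fin n) :
    y j + y' j = y 0 + y' 0 := by
  obtain ⟨m, rfl⟩ : ∃ m, n = m + 1 := ⟨n - 1, by have := NeZero.ne n; omega⟩
  induction j using Fin.induction with
  | zero => rfl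
  | succ k ih =>
    rw [← ih]
    have := congrFun h k.castSucc
    unfold cc at this
    rw [Fin.coeSucc_eq_succ] at this
    have two : ∀ a : ZMod 2, a + a = 0 := by decide
    grind

theorem fE_inj : Function.Injective (fE (n := n)) := by
  intro y y' h
  have h1 := cc_inj (congrArg Prod.fst h)
  have h2 : y 0 = y' 0 := congrArg Prod.snd h
  funext j
  have := h1 j
  rw [h2, CharTwo.add_self_eq_zero, CharTwo.add_eq_zero] at this
  exact this

theorem fO_inj (ho : (n : ZMod 2) = 1) : Function.Injective (fO (n := n)) := by
  intro y y' h
  have h1 := cc_inj (congrArg Prod.fst h)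
  have h2 : ∑ j, y j * y (j + 1) = ∑ j, y' j * y' (j + 1) := congrArg Prod.snd h
  rcases BW.zmod2_cases (y 0 + y' 0) with h0 | h0
  · funext j
    have := h1 j
    rw [h0, CharTwo.add_eq_zero] at this
    exact this
  · exfalso
    have h3 : ∀ j, y j = y' j + 1 := by
      intro j
      have := h1 j
      rw [h0] at this
      rw [← this]
      have two : ∀ a b : ZMod 2, a = b + (a + b) := by decide
      exact two _ _
    simp only [h3, add_mul, mul_add, sum_add_distrib, mul_one, one_mul] at h2
    rw [Equiv.sum_comp (Equiv.addRight (1 : Fin n)) y' |> (fun h => show ∑ j, y' (j + 1) = _ from h)] at h2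
    simp only [sum_const, card_univ, Fintype.card_fin, nsmul_eq_mul, mul_one, ho] at h2
    have two : ∀ a b : ZMod 2, a + b + (b + 1) ≠ a := by decide
    exact two _ _ h2

theorem fE_gen (hn : 3 < n) (he : (n : ZMod 2) = 0) (i : Fin n) (y : Fin n → ZMod 2) :
    fE (Function.update y i (1 + y (i - 1) + y i + y (i + 1))) = actE (BW.gen i) (fE y) := by
  have hs : ((BW.gen i).s)⁻¹ = Equiv.swap (i - 1) i := by simp [BW.gen]
  unfold actE fE
  refine Prod.ext ?_ ?_
  · funext j
    simp only [hs]
    rw [cc_update hn, he]; simp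
  · simp only [hs]
    by_cases h : i = 0
    · subst h
      have k := kappa (0 : Fin n)
      rw [if_pos rfl, he] at k
      simp only [Function.update_self, BW.gen, if_true, Pi.add_apply, add_mul, sum_add_distrib,
        Pi.single_apply, ite_mul, one_mul, zero_mul, sum_ite_eq', mem_univ,
        Equiv.swap_apply_left, Equiv.swap_apply_right, cc, sub_add_cancel]
      have two : ∀ a : ZMod 2, a + a = 0 := by decide
      grind
    · simp [BW.gen, h, Function.update_of_ne (Ne.symm h)]

theorem fO_gen (hn : 3 < n) (ho : (n : ZMod 2) = 1) (i : Fin n) (y : Fin n → ZMod 2) :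
    fO (Function.update y i (1 + y (i - 1) + y i + y (i + 1))) = actO (BW.gen i) (fO y) := by
  have hs : ((BW.gen i).s)⁻¹ = Equiv.swap (i - 1) i := by simp [BW.gen]
  have hi : i - 1 ≠ i := by
    intro h; rw [sub_eq_self] at h; exact one_ne hn h
  have hi' : i + 1 ≠ i := by
    intro h; rw [add_eq_left] at h; exact one_ne hn h
  unfold actO fO
  refine Prod.ext ?_ ?_
  · funext j
    simp only [hs]
    rw [cc_update hn, ho, one_mul]
  · simp only
    rw [← Finset.add_sum_erase _ _ (mem_univ i), ← Finset.add_sum_erase _ _ (mem_univ i),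
      ← Finset.add_sum_erase (univ.erase i) _ (mem_erase.2 ⟨hi, mem_univ (i - 1)⟩),
      ← Finset.add_sum_erase (univ.erase i) _ (mem_erase.2 ⟨hi, mem_univ (i - 1)⟩)]
    rw [← add_assoc, ← add_assoc]
    congr 1
    · simp only [sub_add_cancel, Function.update_self, Function.update_of_ne hi,
        Function.update_of_ne hi']
      generalize y (i - 1) = a
      generalize y i = b
      generalize y (i + 1) = c
      revert a b c
      decide
    · apply Finset.sum_congr rfl
      intro j hj
      simp only [mem_erase, mem_univ, and_true] at hj
      have h3 : j + 1 ≠ i := by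
        rintro rfl; simp at hj
      rw [Function.update_of_ne hj.2, Function.update_of_ne h3]

theorem cc_single (k j : Fin n) :
    cc (Pi.single k 1) j = (if j = k then 1 else 0) + (if j = k - 1 then 1 else 0) + cc 0 j := by
  unfold cc
  simp only [Pi.single_apply, Pi.zero_apply, eq_sub_iff_add_eq]
  ring

theorem stab_perm (hn : 3 < n) (σ : Equiv.Perm (Fin n)) (a : Fin n → ZMod 2)
    (h : ∀ (y : Fin n → ZMod 2) j, cc y (σ⁻¹ j) + a j = cc y j) : σ = 1 := by
  have key : ∀ k j : Fin n,
      ((if σ⁻¹ j = k then 1 else 0) + (if σ⁻¹ j = k - 1 then 1 else 0) : ZMod 2)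
      = (if j = k then 1 else 0) + (if j = k - 1 then 1 else 0) := by
    intro k j
    have e1 := h (Pi.single k 1) j
    have e0 := h 0 j
    rw [cc_single, cc_single] at e1
    linear_combination e1 - e0
  have o1 := one_ne hn
  have o2 := two_ne hn
  have key2 : ∀ k j : Fin n, (σ⁻¹ j = k ∨ σ⁻¹ j = k - 1) → (j = k ∨ j = k - 1) := by
    intro k j hj
    have hk : k ≠ k - 1 := by
      intro h; exact o1 (sub_eq_self.1 h.symm)
    by_contra hc
    push Not at hc
    have := key k j
    rw [if_neg hc.1, if_neg hc.2] at this
    rcases hj with hj | hj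
    · rw [hj, if_pos rfl, if_neg hk] at this
      simp at this
    · rw [hj, if_pos rfl, if_neg hk.symm] at this
      simp at this
  rw [← inv_eq_one]
  ext1 j
  have a1 := key2 (σ⁻¹ j) j (Or.inl rfl)
  have a2 := key2 (σ⁻¹ j + 1) j (Or.inr (by simp))
  rw [add_sub_cancel_right] at a2
  rcases a2 with a2 | a2
  · rcases a1 with a1 | a1
    · exact a1.symm
    · exfalso
      apply o2
      have : σ⁻¹ j + 1 = σ⁻¹ j - 1 := a2.symm.trans a1
      rw [eq_sub_iff_add_eq, add_assoc, add_eq_left] at this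
      exact this
  · exact a2.symm

theorem sum_cc (y : Fin n → ZMod 2) : ∑ j, cc y j = ((n * (n - 1) / 2 : ℕ) : ZMod 2) := by
  unfold cc
  rw [sum_add_distrib, sum_add_distrib,
    (Equiv.sum_comp (Equiv.addRight (1 : Fin n)) y |>
      (fun h => show ∑ j, y (j + 1) = _ from h)), CharTwo.add_self_eq_zero, zero_add,
    Fin.sum_univ_eq_sum_range (fun j => (j : ZMod 2)), ← Nat.cast_sum, Finset.sum_range_id]

theorem const_v (v : Fin n → ZMod 2) (h : ∀ y : Fin n → ZMod 2, ∑ j, v j * cc y j = 0)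
    (j : Fin n) : v j = v 0 := by
  have key : ∀ k, v k = v (k - 1) := by
    intro k
    have e1 := h (Pi.single k 1)
    have e0 := h 0
    simp only [cc_single, mul_add, sum_add_distrib, e0, mul_ite, mul_one, mul_zero,
      sum_ite_eq', mem_univ, if_true, add_zero] at e1
    exact CharTwo.add_eq_zero.1 e1
  obtain ⟨m, rfl⟩ : ∃ m, n = m + 1 := ⟨n - 1, by have := NeZero.ne n; omega⟩
  induction j using Fin.induction with
  | zero => rfl
  | succ k ih =>
    rw [← ih, key k.succ]
    congr 1
    rw [sub_eq_iff_eq_add, Fin.coeSucc_eq_succ]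

end

/-- The order of the dynamics group of Wolfram rule 105 (each local
function replaces `y i` by `1 + y (i-1) + y i + y (i+1)`) is `2^(n-1) * n!` when
`4 ∤ n` and `2^(n-2) * n!` when `4 ∣ n`. -/
theorem stmt_9 {n : ℕ} [NeZero n] (hn : 3 < n)
    (Q : Fin n → Equiv.Perm (Fin n → ZMod 2))
    (hQ : ∀ (i : Fin n) (y : Fin n → ZMod 2),
      Q i y = Function.update y i (1 + y (i - 1) + y i + y (i + 1))) :
    (¬ (4 ∣ n) → Nat.card ↥(Subgroup.closure (Set.range Q))
      = 2 ^ (n - 1) * Nat.factorial n) ∧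
    ((4 ∣ n) → Nat.card ↥(Subgroup.closure (Set.range Q))
      = 2 ^ (n - 2) * Nat.factorial n) := by
  have hcard : Nat.card (Subgroup.closure (Set.range (BW.gen (n := n))))
      = 2 ^ (n - 1) * n.factorial := by
    rw [BW.closure_gen hn]
    have := BW.card_ker (n := n)
    obtain ⟨m, hm⟩ : ∃ m, n = m + 1 := ⟨n - 1, by omega⟩
    have e : 2 ^ n = 2 * 2 ^ (n - 1) := by rw [hm]; simp [pow_succ, mul_comm]
    rw [e, mul_assoc] at this
    exact Nat.eq_of_mul_eq_mul_left (by norm_num) this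
  rcases BW.zmod2_cases (n : ZMod 2) with he | ho
  · obtain ⟨K, hK, hKc⟩ := card_transfer actE actE_one actE_mul fE fE_inj BW.gen Q
      (fun i y => by rw [hQ]; exact fE_gen hn he i y)
    have he2 : 2 ∣ n := (ZMod.natCast_eq_zero_iff n 2).1 he
    have hK1 : ∀ w ∈ K, w.1.s = 1 ∧ ∀ y : Fin n → ZMod 2, ∑ j, w.1.v j * cc y j = 0 := by
      intro w hw
      rw [hK] at hw
      have hs : w.1.s = 1 := by
        apply stab_perm hn _ 0
        intro y j
        have := congrFun (congrArg Prod.fst (hw y)) j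
        simpa [actE, fE] using this
      refine ⟨hs, fun y => ?_⟩
      have := congrArg Prod.snd (hw y)
      simpa [actE, fE, hs] using this
    have hK2 : ∀ w ∈ K, w.1 = 1 ∨ w.1 = ⟨fun _ => 1, 1⟩ := by
      intro w hw
      obtain ⟨h1, h2⟩ := hK1 w hw
      have h3 := const_v _ h2
      rcases BW.zmod2_cases (w.1.v 0) with h | h
      · left
        ext j
        · rw [h3, h]; rfl
        · rw [h1]; rfl
      · right
        ext j
        · rw [h3, h]
        · rw [h1]
    constructor
    · intro h4
      have hKb : K = ⊥ := by
        rw [Subgroup.eq_bot_iff_forall]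
        intro w hw
        rcases hK2 w hw with h | h
        · exact Subtype.ext h
        · exfalso
          have := (hK1 w hw).2 0
          rw [h] at this
          simp only [one_mul] at this
          rw [sum_cc, ZMod.natCast_eq_zero_iff] at this
          obtain ⟨k, rfl⟩ := he2
          have e : 2 * k * (2 * k - 1) / 2 = k * (2 * k - 1) := by
            rw [mul_assoc]; simp
          rw [e, Nat.Prime.dvd_mul Nat.prime_two] at this
          omega
      rw [hKb, Subgroup.card_bot, one_mul] at hKc
      rw [hKc, hcard]
    · intro h4
      have hmem : (⟨fun _ => 1, 1⟩ : BW n) ∈ Subgroup.closure (Set.range (BW.gen (n := n))) := by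
        rw [BW.closure_gen hn, BW.mem_ker_sgn]
        simp [he]
      have hmemK : (⟨_, hmem⟩ : Subgroup.closure (Set.range (BW.gen (n := n)))) ∈ K := by
        rw [hK]
        intro y
        have := sum_cc y
        have e : ((n * (n - 1) / 2 : ℕ) : ZMod 2) = 0 := by
          rw [ZMod.natCast_eq_zero_iff]
          obtain ⟨k, rfl⟩ := h4
          have e : 4 * k * (4 * k - 1) / 2 = 2 * (k * (4 * k - 1)) := by
            rw [show 4 * k * (4 * k - 1) = 2 * (2 * (k * (4 * k - 1))) by ring]; simp
          rw [e]; exact dvd_mul_right _ _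
        rw [e] at this
        simp [actE, fE, this]
      have hc2 : Nat.card K = 2 := by
        rw [Nat.card_eq_two_iff]
        refine ⟨1, ⟨_, hmemK⟩, ?_, ?_⟩
        · intro h
          have h1 := congrArg (fun w : K => w.1.1.v 0) h
          simp at h1
        · rw [Set.eq_univ_iff_forall]
          intro w
          rcases hK2 w.1 w.2 with h | h
          · left; exact Subtype.ext (Subtype.ext h)
          · right; exact Subtype.ext (Subtype.ext h)
      rw [hc2, hcard] at hKc
      obtain ⟨m, hm⟩ : ∃ m, n = m + 2 := ⟨n - 2, by omega⟩
      have e : 2 ^ (n - 1) = 2 * 2 ^ (n - 2) := by rw [hm]; simp [pow_succ, mul_comm]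
      rw [e, mul_assoc] at hKc
      exact Nat.eq_of_mul_eq_mul_left (by norm_num) hKc
  · have hne : ¬ 4 ∣ n := by
      intro h
      have : (n : ZMod 2) = 0 := by
        rw [ZMod.natCast_eq_zero_iff]; omega
      rw [this] at ho
      exact absurd ho (by decide)
    refine ⟨fun _ => ?_, fun h => absurd h hne⟩
    obtain ⟨K, hK, hKc⟩ := card_transfer actO actO_one actO_mul fO (fO_inj ho) BW.gen Q
      (fun i y => by rw [hQ]; exact fO_gen hn ho i y)
    have hKb : K = ⊥ := by
      rw [Subgroup.eq_bot_iff_forall]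
      intro w hw
      rw [hK] at hw
      have h1 : ∀ (y : Fin n → ZMod 2) j, cc y (w.1.s⁻¹ j) + w.1.v j = cc y j :=
        fun y j => congrFun (congrArg Prod.fst (hw y)) j
      have hs : w.1.s = 1 := stab_perm hn _ _ h1
      apply Subtype.ext
      ext j
      · have := h1 0 j
        rw [hs] at this
        simpa using this
      · rw [hs]; rfl
    rw [hKb, Subgroup.card_bot, one_mul] at hKc
    rw [hKc, hcard]
end
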